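/- Suppose the weight functions wt and w̃t from ℤ×ℕ to a field satisfy: (i) wt(p)·(w̃t(p) − 1) = c for all p ∈ ℤ×ℕ, for some constant c, with w̃t(p) ≠ 0 for all p; and (ii) there are scalars t_j such that wt_HP(D) = t_j · wt_V(D) for every j and every D ∈ Dyck_{2j} all of whose peaks are high peaks. Then for all positive integers n and k: Σ over tuples (D_1 ≤ ⋯ ≤ D_k) ∈ Dyck^k_{2n} of wt_V(D_1)⋯wt_V(D_k) · Π_{i=1}^{k−1} Π_{p∈D_i∩D_{i+1}} (1 − 1/w̃t(p)) equals Π_{i=1}^{k−1} t_{n+2i}^i times Σ over tuples (D_1 < ⋯ < D_k) ∈ Dyck^k_{2n} of wt_V(D_1)⋯wt_V(D_k). -/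

import Mathlib

open Finset

attribute [local instance 10] Classical.propDecidable

noncomputable section

namespace Paper

/-! ### Words and permutation statistics (all words are 1-based). -/

/-- The word (one-line notation, 1-based) of a permutation of `{1, …, N}`:
`word π i = π(i)` for `1 ≤ i ≤ N`, and `0` otherwise. -/
def word {N : ℕ} (π : Equiv.Perm (Fin N)) (i : ℕ) : ℕ :=
  if h : 1 ≤ i ∧ i ≤ N then (π ⟨i - 1, by omega⟩ : ℕ) + 1 else 0

/-- The major index of a word of length `N`: the sum of the descents. -/
def majW (N : ℕ) (w : ℕ → ℕ) : ℕ :=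
  ∑ i ∈ Finset.Icc 1 (N - 1), if w (i + 1) < w i then i else 0

/-- The number of inversions of a word of length `N`. -/
def invW (N : ℕ) (w : ℕ → ℕ) : ℕ :=
  (((Finset.Icc 1 N) ×ˢ (Finset.Icc 1 N)).filter
    fun p => p.1 < p.2 ∧ w p.2 < w p.1).card

/-- The number of descents of a word of length `m`. -/
def desW (m : ℕ) (w : ℕ → ℕ) : ℕ :=
  ((Finset.Icc 1 (m - 1)).filter fun i => w (i + 1) < w i).card

/-- The number of ascents of a word of length `m`. -/
def ascW (m : ℕ) (w : ℕ → ℕ) : ℕ :=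
  ((Finset.Icc 1 (m - 1)).filter fun i => w i < w (i + 1)).card

/-- The number of non-descents of a word of length `m`. -/
def ndesW (m : ℕ) (w : ℕ → ℕ) : ℕ :=
  ((Finset.Icc 1 m).filter fun i => i = m ∨ w i < w (i + 1)).card

/-- The number of non-ascents of a word of length `m`. -/
def nascW (m : ℕ) (w : ℕ → ℕ) : ℕ :=
  ((Finset.Icc 1 m).filter fun i => i = m ∨ ¬ w i < w (i + 1)).card

/-- `π_e = π₂π₄⋯`, the subword of even-position entries, as a 1-based word. -/
def evenWord {N : ℕ} (π : Equiv.Perm (Fin N)) (j : ℕ) : ℕ := word π (2 * j)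

/-- `π_o = π₁π₃⋯`, the subword of odd-position entries, as a 1-based word. -/
def oddWord {N : ℕ} (π : Equiv.Perm (Fin N)) (j : ℕ) : ℕ := word π (2 * j - 1)

/-- A word of length `N` is alternating: `w₁ < w₂ > w₃ < w₄ > ⋯`. -/
def IsAltW (N : ℕ) (w : ℕ → ℕ) : Prop :=
  ∀ i ∈ Finset.Icc 1 (N - 1), (i % 2 = 1 → w i < w (i + 1)) ∧ (i % 2 = 0 → w (i + 1) < w i)

/-- A word of length `N` is reverse alternating: `w₁ > w₂ < w₃ > w₄ < ⋯`. -/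
def IsRaltW (N : ℕ) (w : ℕ → ℕ) : Prop :=
  ∀ i ∈ Finset.Icc 1 (N - 1), (i % 2 = 1 → w (i + 1) < w i) ∧ (i % 2 = 0 → w i < w (i + 1))

/-- `Alt_N`, the set of alternating permutations of `{1, …, N}`. -/
def altPerms (N : ℕ) : Finset (Equiv.Perm (Fin N)) :=
  Finset.univ.filter fun π => IsAltW N (word π)

/-- `Ralt_N`, the set of reverse alternating permutations of `{1, …, N}`. -/
def raltPerms (N : ℕ) : Finset (Equiv.Perm (Fin N)) :=
  Finset.univ.filter fun π => IsRaltW N (word π)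

/-- `κ_N = (1)(2,3)(4,5)⋯`, acting on the 1-based values `{1, …, N}`. -/
def kappaNat (N j : ℕ) : ℕ :=
  if j % 2 = 0 ∧ 2 ≤ j ∧ j + 1 ≤ N then j + 1
  else if j % 2 = 1 ∧ 3 ≤ j ∧ j ≤ N then j - 1
  else j

/-- `η_N = (1,2)(3,4)⋯`, acting on the 1-based values `{1, …, N}`. -/
def etaNat (N j : ℕ) : ℕ :=
  if j % 2 = 1 ∧ j + 1 ≤ N then j + 1
  else if j % 2 = 0 ∧ 2 ≤ j ∧ j ≤ N then j - 1
  else j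

/-- `maj(π⁻¹)`. -/
def majInv (N : ℕ) (π : Equiv.Perm (Fin N)) : ℕ := majW N (word π.symm)

/-- `maj(κ_N π⁻¹)`. -/
def majKappaInv (N : ℕ) (π : Equiv.Perm (Fin N)) : ℕ :=
  majW N fun i => kappaNat N (word π.symm i)

/-- `maj(η_N π⁻¹)`. -/
def majEtaInv (N : ℕ) (π : Equiv.Perm (Fin N)) : ℕ :=
  majW N fun i => etaNat N (word π.symm i)

/-- The reversal permutation `i ↦ N + 1 - i` of `Fin N`. -/
def revPerm (N : ℕ) : Equiv.Perm (Fin N) :=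
  ⟨Fin.rev, Fin.rev, fun i => Fin.rev_rev i, fun i => Fin.rev_rev i⟩

/-- `φ(π)ᵢ = (N+1) - π_{N+1-i}`. -/
def phiMap {N : ℕ} (π : Equiv.Perm (Fin N)) : Equiv.Perm (Fin N) :=
  ((revPerm N).trans π).trans (revPerm N)

/-! ### Lattice paths.

A path with `L` unit steps is encoded by `s : Fin L → Bool` (`true` = up-step `(1,1)`,
`false` = down-step `(1,-1)`). -/

/-- The vertical displacement of the `j`-th step. -/
def stepVal {L : ℕ} (s : Fin L → Bool) (j : ℕ) : ℤ :=
  if h : j < L then (if s ⟨j, h⟩ then 1 else -1) else 0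

/-- The height of the path after `i` steps. -/
def pht {L : ℕ} (s : Fin L → Bool) (i : ℕ) : ℤ := ∑ j ∈ Finset.range i, stepVal s j

/-- A Dyck path: stays (weakly) above the `x`-axis and ends at height `0`. -/
def IsDyck {L : ℕ} (s : Fin L → Bool) : Prop :=
  (∀ i ∈ Finset.range (L + 1), 0 ≤ pht s i) ∧ pht s L = 0

/-- The Dyck paths with `L` steps. -/
def dyckPaths (L : ℕ) : Finset (Fin L → Bool) := Finset.univ.filter fun s => IsDyck s

/-- The (indices of the) valleys of a path: a down-step followed by an up-step. -/
def valleys {L : ℕ} (s : Fin L → Bool) : Finset ℕ :=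
  (Finset.Icc 1 (L - 1)).filter fun i => stepVal s (i - 1) = -1 ∧ stepVal s i = 1

/-- The (indices of the) peaks of a path: an up-step followed by a down-step. -/
def peaks {L : ℕ} (s : Fin L → Bool) : Finset ℕ :=
  (Finset.Icc 1 (L - 1)).filter fun i => stepVal s (i - 1) = 1 ∧ stepVal s i = -1

/-- The (indices of the) high peaks of a path: peaks of height at least `2`. -/
def highPeaks {L : ℕ} (s : Fin L → Bool) : Finset ℕ :=
  (peaks s).filter fun i => 2 ≤ pht s i

/-- The height over abscissa `x` of a path starting at `(-m, 0)`. -/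
def aht (m : ℕ) {L : ℕ} (s : Fin L → Bool) (x : ℤ) : ℤ := pht s (x + m).toNat

/-- `D₁ < D₂`, for `D₁` starting at `(-m₁,0)` and `D₂` at `(-m₂,0)`, `m₁ ≤ m₂`:
strictly below on the common range of abscissas. -/
def PathLT (m₁ m₂ : ℕ) {L₁ L₂ : ℕ} (s₁ : Fin L₁ → Bool) (s₂ : Fin L₂ → Bool) : Prop :=
  ∀ x ∈ Finset.Icc (-(m₁ : ℤ)) (m₁ : ℤ), aht m₁ s₁ x < aht m₂ s₂ x

/-- `D₁ ≤ D₂`: weakly below, sharing no step. -/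
def PathLE (m₁ m₂ : ℕ) {L₁ L₂ : ℕ} (s₁ : Fin L₁ → Bool) (s₂ : Fin L₂ → Bool) : Prop :=
  (∀ x ∈ Finset.Icc (-(m₁ : ℤ)) (m₁ : ℤ), aht m₁ s₁ x ≤ aht m₂ s₂ x) ∧
    ∀ x ∈ Finset.Icc (-(m₁ : ℤ)) ((m₁ : ℤ) - 1),
      ¬(aht m₁ s₁ x = aht m₂ s₂ x ∧ aht m₁ s₁ (x + 1) = aht m₂ s₂ (x + 1))

/-- The abscissas of the common lattice points of two paths. -/
def interPts (m₁ m₂ : ℕ) {L₁ L₂ : ℕ} (s₁ : Fin L₁ → Bool) (s₂ : Fin L₂ → Bool) : Finset ℤ :=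
  (Finset.Icc (-(m₁ : ℤ)) (m₁ : ℤ)).filter fun x => aht m₁ s₁ x = aht m₂ s₂ x

/-- `Dyck^k_{2n}`: tuples `(D₁, …, D_k)` with `D_i ∈ Dyck((-n-2i+2,0) → (n+2i-2,0))`
(0-based: `D_i` has half-length `n + 2i`). -/
abbrev DyckTuple (n k : ℕ) := ∀ i : Fin k, Fin (2 * (n + 2 * (i : ℕ))) → Bool

/-- The tuples `(D₁ ≤ D₂ ≤ ⋯ ≤ D_k) ∈ Dyck^k_{2n}`. -/
def weakTuples (n k : ℕ) : Finset (DyckTuple n k) :=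
  Finset.univ.filter fun D =>
    (∀ i : Fin k, IsDyck (D i)) ∧
      ∀ (i : ℕ) (h : i + 1 < k),
        PathLE (n + 2 * i) (n + 2 * (i + 1)) (D ⟨i, by omega⟩) (D ⟨i + 1, h⟩)

/-- The tuples `(D₁ < D₂ < ⋯ < D_k) ∈ Dyck^k_{2n}`. -/
def strictTuples (n k : ℕ) : Finset (DyckTuple n k) :=
  Finset.univ.filter fun D =>
    (∀ i : Fin k, IsDyck (D i)) ∧
      ∀ (i : ℕ) (h : i + 1 < k),
        PathLT (n + 2 * i) (n + 2 * (i + 1)) (D ⟨i, by omega⟩) (D ⟨i + 1, h⟩)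

/-- The lattice points of a path starting at `(-m, 0)`, as a finite subset of `ℤ × ℤ`. -/
def pathPoints (m : ℕ) {L : ℕ} (s : Fin L → Bool) : Finset (ℤ × ℤ) :=
  (Finset.range (L + 1)).image fun t : ℕ => (-(m : ℤ) + (t : ℤ), pht s t)

/-- The non-valley lattice points of a path starting at `(-m, 0)`. -/
def nonValleyPoints (m : ℕ) {L : ℕ} (s : Fin L → Bool) : Finset (ℤ × ℤ) :=
  ((Finset.range (L + 1)).filter fun t => t ∉ valleys s).image
    fun t : ℕ => (-(m : ℤ) + (t : ℤ), pht s t)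

section Weights

variable {F : Type*} [Field F]

/-- The `i`-th lattice point (in `ℤ × ℕ`) of a path starting at `(a, 0)`. -/
def ptOf (a : ℤ) {L : ℕ} (s : Fin L → Bool) (i : ℕ) : ℤ × ℕ := (a + i, (pht s i).toNat)

/-- `wt_V(D) = ∏_{p ∈ D} wt(p) · ∏_{p ∈ V(D)} w̃t(p)` for a path starting at `(a, 0)`. -/
def wtVal (wt wte : ℤ × ℕ → F) (a : ℤ) {L : ℕ} (s : Fin L → Bool) : F :=
  (∏ i ∈ Finset.range (L + 1), wt (ptOf a s i)) * ∏ i ∈ valleys s, wte (ptOf a s i)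

/-- `wt_HP(D) = ∏_{p ∈ D} wt(p) · ∏_{p ∈ HP(D)} w̃t(p)` for a path starting at `(a, 0)`. -/
def wtHigh (wt wte : ℤ × ℕ → F) (a : ℤ) {L : ℕ} (s : Fin L → Bool) : F :=
  (∏ i ∈ Finset.range (L + 1), wt (ptOf a s i)) * ∏ i ∈ highPeaks s, wte (ptOf a s i)

/-- `∏_{p ∈ D₁ ∩ D₂} f(p)`, for `D₁` starting at `(-m₁,0)` and `D₂` at `(-m₂,0)`. -/
def interProd (f : ℤ × ℕ → F) (m₁ m₂ : ℕ) {L₁ L₂ : ℕ}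
    (s₁ : Fin L₁ → Bool) (s₂ : Fin L₂ → Bool) : F :=
  ∏ x ∈ interPts m₁ m₂ s₁ s₂, f (x, (aht m₁ s₁ x).toNat)

/-- The sum over `(D₁ ≤ ⋯ ≤ D_k) ∈ Dyck^k_{2n}` of
`wt_V(D₁)⋯wt_V(D_k) ∏_{i=1}^{k-1} ∏_{p ∈ D_i ∩ D_{i+1}} (1 - w̃t(p)⁻¹)`. -/
def weakSum (wt wte : ℤ × ℕ → F) (n k : ℕ) : F :=
  ∑ D ∈ weakTuples n k,
    (∏ i : Fin k, wtVal wt wte (-(n : ℤ) - 2 * (i : ℕ)) (D i)) *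
      ∏ j : Fin (k - 1),
        interProd (fun p => 1 - (wte p)⁻¹) (n + 2 * (j : ℕ)) (n + 2 * ((j : ℕ) + 1))
          (D ⟨(j : ℕ), by have := j.isLt; omega⟩)
          (D ⟨(j : ℕ) + 1, by have := j.isLt; omega⟩)

/-- The sum over `(D₁ < ⋯ < D_k) ∈ Dyck^k_{2n}` of `wt_V(D₁)⋯wt_V(D_k)`. -/
def strictSum (wt wte : ℤ × ℕ → F) (n k : ℕ) : F :=
  ∑ D ∈ strictTuples n k, ∏ i : Fin k, wtVal wt wte (-(n : ℤ) - 2 * (i : ℕ)) (D i)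

end Weights

/-! ### Schröder paths.

A path with `L` steps is encoded by `st : Fin L → Fin 3`
(`0` = up-step `(1,1)`, `1` = down-step `(1,-1)`, `2` = horizontal step `(2,0)`). -/

/-- The horizontal displacement of the `j`-th step. -/
def stepX {L : ℕ} (st : Fin L → Fin 3) (j : ℕ) : ℕ :=
  if h : j < L then (if st ⟨j, h⟩ = 2 then 2 else 1) else 0

/-- The vertical displacement of the `j`-th step. -/
def stepY {L : ℕ} (st : Fin L → Fin 3) (j : ℕ) : ℤ :=
  if h : j < L then (if st ⟨j, h⟩ = 0 then 1 else if st ⟨j, h⟩ = 1 then -1 else 0) else 0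

/-- The horizontal position (relative to the start) after `j` steps. -/
def xpos {L : ℕ} (st : Fin L → Fin 3) (j : ℕ) : ℕ := ∑ t ∈ Finset.range j, stepX st t

/-- The height after `j` steps. -/
def ypos {L : ℕ} (st : Fin L → Fin 3) (j : ℕ) : ℤ := ∑ t ∈ Finset.range j, stepY st t

/-- A (little) Schröder path of horizontal span `2m`: nonnegative heights, ends at
height `0`, and no horizontal step on the `x`-axis. -/
def IsSch (m : ℕ) {L : ℕ} (st : Fin L → Fin 3) : Prop :=
  xpos st L = 2 * m ∧ (∀ j ∈ Finset.range (L + 1), 0 ≤ ypos st j) ∧ ypos st L = 0 ∧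
    ∀ j ∈ Finset.range L, stepX st j = 2 → ypos st j ≠ 0

/-- The height of a Schröder path over the relative abscissa `x` (midpoints of
horizontal steps get the height of that horizontal step). -/
def schHeight {L : ℕ} (st : Fin L → Fin 3) (x : ℕ) : ℤ :=
  ∑ t ∈ Finset.range L, if xpos st (t + 1) ≤ x then stepY st t else 0

/-- The relative abscissa `x` is the midpoint of a horizontal step. -/
def IsHMid {L : ℕ} (st : Fin L → Fin 3) (x : ℕ) : Prop :=
  ∃ j ∈ Finset.range L, stepX st j = 2 ∧ xpos st j + 1 = x

/-- The number of horizontal steps of a Schröder path. -/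
def hsCount {L : ℕ} (st : Fin L → Fin 3) : ℕ :=
  ((Finset.range L).filter fun j => stepX st j = 2).card

/-- `wt_Sch(c, S) = c^{hs(S)} ∏_{p ∈ S} wt(p)` for a Schröder path starting at `(a,0)`. -/
def wtSch {F : Type*} [Field F] (wt : ℤ × ℕ → F) (c : F) (a : ℤ) {L : ℕ}
    (st : Fin L → Fin 3) : F :=
  c ^ hsCount st * ∏ j ∈ Finset.range (L + 1), wt (a + xpos st j, (ypos st j).toNat)

/-- `φ_V(S) = D`: the Dyck path `D` (with `L'` steps) is obtained from the Schröder
path `S` by replacing each horizontal step by a down-step followed by an up-step. -/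
def PhiVEq {L L' : ℕ} (st : Fin L → Fin 3) (s : Fin L' → Bool) : Prop :=
  ∀ x ∈ Finset.range (L' + 1),
    pht s x = schHeight st x - (if IsHMid st x then 1 else 0)

/-- `φ_HP(S) = D`: the Dyck path `D` is obtained from the Schröder path `S` by
replacing each horizontal step by an up-step followed by a down-step. -/
def PhiHPEq {L L' : ℕ} (st : Fin L → Fin 3) (s : Fin L' → Bool) : Prop :=
  ∀ x ∈ Finset.range (L' + 1),
    pht s x = schHeight st x + (if IsHMid st x then 1 else 0)

/-! ### Young diagrams, excited and pleasant diagrams, reverse plane partitions. -/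

/-- The cells (1-based, matrix coordinates) of the staircase `δ_m = (m-1, m-2, …, 1)`. -/
def deltaCells (m : ℕ) : Finset (ℕ × ℕ) :=
  ((Finset.Icc 1 m) ×ˢ (Finset.Icc 1 m)).filter fun c => c.1 + c.2 ≤ m

/-- An excited move inside the Young diagram `lam`. -/
def ExcitedStep (lam : Finset (ℕ × ℕ)) (D D' : Finset (ℕ × ℕ)) : Prop :=
  ∃ i j : ℕ, (i, j) ∈ D ∧ (i + 1, j) ∉ D ∧ (i, j + 1) ∉ D ∧ (i + 1, j + 1) ∉ D ∧
    (i + 1, j + 1) ∈ lam ∧ D' = insert (i + 1, j + 1) (D.erase (i, j))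

/-- `D` is an excited diagram of `lam/mu`. -/
def IsExcited (lam mu D : Finset (ℕ × ℕ)) : Prop :=
  Relation.ReflTransGen (ExcitedStep lam) mu D

/-- `P` is a pleasant diagram of `lam/mu`: a subset of `lam \ D` for an excited diagram `D`. -/
def IsPleasant (lam mu : Finset (ℕ × ℕ)) (P : Finset (ℕ × ℕ)) : Prop :=
  ∃ D, IsExcited lam mu D ∧ P ⊆ lam \ D

/-- `p(lam/mu)`, the number of pleasant diagrams of `lam/mu`. -/
def pleasantCount (lam mu : Finset (ℕ × ℕ)) : ℕ :=
  Set.ncard {P : Finset (ℕ × ℕ) | IsPleasant lam mu P}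

/-- A reverse plane partition on the skew shape `shape`: a filling by nonnegative
integers (vanishing off the shape) weakly increasing along rows and columns. -/
def IsRPP (shape : Finset (ℕ × ℕ)) (f : ℕ × ℕ → ℕ) : Prop :=
  (∀ c, c ∉ shape → f c = 0) ∧
    (∀ i j : ℕ, (i, j) ∈ shape → (i, j + 1) ∈ shape → f (i, j) ≤ f (i, j + 1)) ∧
    ∀ i j : ℕ, (i, j) ∈ shape → (i + 1, j) ∈ shape → f (i, j) ≤ f (i + 1, j)

/-- `∑_{π ∈ RPP(shape)} q^{|π|}` as a formal power series in `q`. -/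
def rppGF (shape : Finset (ℕ × ℕ)) : PowerSeries ℚ :=
  PowerSeries.mk fun N =>
    (Set.ncard {f : ℕ × ℕ → ℕ | IsRPP shape f ∧ ∑ c ∈ shape, f c = N} : ℚ)

/-- `(q; q)_m = ∏_{i=1}^m (1 - q^i)` as a formal power series. -/
def pochPS (m : ℕ) : PowerSeries ℚ :=
  ∏ i ∈ Finset.Icc 1 m, (1 - (PowerSeries.X : PowerSeries ℚ) ^ i)

/-- `E*_N(q) = ∑_{π ∈ Alt_N} q^{maj(κ_N π⁻¹)}` as a formal power series. -/
def EstarPS (N : ℕ) : PowerSeries ℚ :=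
  ∑ π ∈ altPerms N, (PowerSeries.X : PowerSeries ℚ) ^ majKappaInv N π

/-- `E*_m(q)/(q;q)_m` for `m ≥ 0`, and `0` for `m < 0`. -/
def EstarEntry (m : ℤ) : PowerSeries ℚ :=
  if m < 0 then 0 else EstarPS m.toNat * (pochPS m.toNat)⁻¹

/-- The Gaussian binomial coefficient `[N choose M]_q` as a formal power series. -/
def gaussPS (N M : ℕ) : PowerSeries ℚ :=
  pochPS N * (pochPS M * pochPS (N - M))⁻¹

/-!
Condition (i) expands `wt_V` and `wt_HP` into sums over sets of marked valleys, respectively marked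
high peaks: a marked point counts `c`, any other point `p` counts `wt p`. Reflecting the marked
turns is a weight-preserving bijection between Dyck paths with marked valleys and Dyck paths with
marked high peaks. The common points of `D₁ ≤ D₂` are peaks of `D₁` and valleys of `D₂`, and the
factors `1 - 1 / w̃t(p)` force all of them to be marked. As the two heights have the same parity,
reflecting the marked valleys of `D₂`, or the marked peaks of `D₁`, then turns `D₁ ≤ D₂` into
`D₁ < D₂`.

Together with condition (ii), this gives for the transfer matrices `W_m` and `S_m` of the weak and
the strict sum, from `Dyck_{2m}` to `Dyck_{2m+4}`, the relations
`W_m S_{m+2} = t_{m+2} S_m W_{m+2}` and `W_m 𝟙 = t_{m+2} S_m 𝟙`. Move the factors of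
`W_n W_{n+2} ⋯ W_{n+2(k-2)} 𝟙` to the right end, where each becomes an `S`, the rightmost first:
the `i`-th matrix from the left meets `t_{n+2i}, …, t_{n+2(k-1)}`, so `t_{n+2i}` occurs `i` times.
-/

/-! ### Transfer matrices -/

section TransferMatrices

open Matrix

variable {R : Type*} [CommSemiring R]

/-- The vector `A₀ A₁ ⋯ Aₖ₋₁ 𝟙`, whose entry at `x` is the total weight of the `k`-step walks
starting at `x`. The step matrices go between varying index types, so the recursion shifts the
whole family. -/
def walkVec : (k : ℕ) → {α : ℕ → Type*} → [∀ i, Fintype (α i)] →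
    (∀ i, Matrix (α i) (α (i + 1)) R) → α 0 → R
  | 0, _, _, _ => 1
  | k + 1, _, _, A => A 0 *ᵥ walkVec k fun i => A (i + 1)

lemma sum_walks_eq_dotProduct_walkVec (k : ℕ) {α : ℕ → Type*} [∀ i, Fintype (α i)]
    (A : ∀ i, Matrix (α i) (α (i + 1)) R) (w : α 0 → R) :
    ∑ D : ∀ i : Fin (k + 1), α i, w (D 0) * ∏ j : Fin k, A j (D j.castSucc) (D j.succ) =
      w ⬝ᵥ walkVec k A := by
  induction k generalizing α with
  | zero =>
    rw [← (Fin.consEquiv fun i : Fin 1 => α i).sum_comp, Fintype.sum_prod_type]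
    simp [Fin.consEquiv, walkVec, dotProduct]
  | succ k ih =>
    rw [← (Fin.consEquiv fun i : Fin (k + 2) => α i).sum_comp, Fintype.sum_prod_type]
    refine sum_congr rfl fun x _ => ?_
    have hx := ih (α := fun i => α (i + 1)) (fun i => A (i + 1)) (A 0 x)
    refine Eq.trans ?_ (congrArg (w x * ·) hx)
    rw [mul_sum]
    refine sum_congr rfl fun D _ => ?_
    rw [Fin.prod_univ_succ]
    rfl

variable {α : ℕ → Type*} [∀ i, Fintype (α i)] {A B : ∀ i, Matrix (α i) (α (i + 1)) R} {t : ℕ → R}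

lemma mulVec_walkVec (hcomm : ∀ i, A i * B (i + 1) = t i • (B i * A (i + 1)))
    (hone : ∀ i, A i *ᵥ 1 = t i • B i *ᵥ 1) (k : ℕ) :
    A 0 *ᵥ walkVec k (fun i => B (i + 1)) = (∏ i ∈ range (k + 1), t i) • walkVec (k + 1) B := by
  induction k generalizing α t with
  | zero => simpa [walkVec] using hone 0
  | succ k ih =>
    calc A 0 *ᵥ walkVec (k + 1) (fun i => B (i + 1))
        = (A 0 * B 1) *ᵥ walkVec k (fun i => B (i + 1 + 1)) := mulVec_mulVec _ _ _
      _ = t 0 • B 0 *ᵥ (A 1 *ᵥ walkVec k (fun i => B (i + 1 + 1))) := by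
        rw [hcomm 0, smul_mulVec, mulVec_mulVec]
      _ = t 0 • B 0 *ᵥ ((∏ i ∈ range (k + 1), t (i + 1)) •
            walkVec (k + 1) (fun i => B (i + 1))) := by
        rw [← ih (fun i => hcomm (i + 1)) fun i => hone (i + 1)]
      _ = (∏ i ∈ range (k + 1 + 1), t i) • walkVec (k + 1 + 1) B := by
        rw [mulVec_smul, smul_smul, prod_range_succ' t, mul_comm (t 0)]
        rfl

lemma walkVec_eq_prod_pow_smul (hcomm : ∀ i, A i * B (i + 1) = t i • (B i * A (i + 1)))
    (hone : ∀ i, A i *ᵥ 1 = t i • B i *ᵥ 1) (k : ℕ) :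
    walkVec k A = (∏ i ∈ range k, t i ^ (i + 1)) • walkVec k B := by
  induction k generalizing α t with
  | zero => simp [walkVec]
  | succ k ih =>
    have hexp : (∏ i ∈ range k, t (i + 1) ^ (i + 1)) * ∏ i ∈ range (k + 1), t i =
        ∏ i ∈ range (k + 1), t i ^ (i + 1) := by
      rw [prod_range_succ' t, ← mul_assoc, ← prod_mul_distrib, prod_range_succ' _ k]
      simp only [pow_succ, pow_zero, one_mul]
    calc walkVec (k + 1) A
        = A 0 *ᵥ ((∏ i ∈ range k, t (i + 1) ^ (i + 1)) • walkVec k (fun i => B (i + 1))) := by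
          rw [← ih (fun i => hcomm (i + 1)) fun i => hone (i + 1)]
          rfl
      _ = (∏ i ∈ range (k + 1), t i ^ (i + 1)) • walkVec (k + 1) B := by
        rw [mulVec_smul, mulVec_walkVec hcomm hone, smul_smul, hexp]

end TransferMatrices

/-! ### Heights, valleys and peaks -/

section PathHeights

variable {L : ℕ} (s : Fin L → Bool)

lemma pht_zero : pht s 0 = 0 := by simp [pht]

lemma pht_succ (i : ℕ) : pht s (i + 1) = pht s i + stepVal s i :=
  sum_range_succ _ _

lemma pht_succ_eq_or {i : ℕ} (h : i < L) :
    pht s (i + 1) = pht s i + 1 ∨ pht s (i + 1) = pht s i - 1 := by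
  rw [pht_succ, stepVal, dif_pos h]
  split <;> simp [sub_eq_add_neg]

lemma pht_emod_two {i : ℕ} (h : i ≤ L) : pht s i % 2 = (i : ℤ) % 2 := by
  induction i with
  | zero => simp [pht_zero]
  | succ i ih =>
    have := ih (by omega)
    have := pht_succ_eq_or s h
    omega

variable {s}

lemma mem_dyckPaths : s ∈ dyckPaths L ↔ IsDyck s := by simp [dyckPaths]

lemma IsDyck.pht_nonneg (h : IsDyck s) {i : ℕ} (hi : i ≤ L) : 0 ≤ pht s i :=
  h.1 i (mem_range_succ_iff.2 hi)

lemma mem_valleys {i : ℕ} : i ∈ valleys s ↔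
    1 ≤ i ∧ i < L ∧ pht s (i - 1) = pht s i + 1 ∧ pht s (i + 1) = pht s i + 1 := by
  rcases i with _ | i
  · simp [valleys]
  · have := pht_succ s i
    have := pht_succ s (i + 1)
    simp only [valleys, mem_filter, mem_Icc, Nat.add_sub_cancel]
    omega

lemma mem_peaks {i : ℕ} : i ∈ peaks s ↔
    1 ≤ i ∧ i < L ∧ pht s (i - 1) = pht s i - 1 ∧ pht s (i + 1) = pht s i - 1 := by
  rcases i with _ | i
  · simp [peaks]
  · have := pht_succ s i
    have := pht_succ s (i + 1)
    simp only [peaks, mem_filter, mem_Icc, Nat.add_sub_cancel]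
    omega

lemma mem_highPeaks {i : ℕ} : i ∈ highPeaks s ↔ i ∈ peaks s ∧ 2 ≤ pht s i := by
  simp [highPeaks]

lemma highPeaks_subset_peaks : highPeaks s ⊆ peaks s := filter_subset _ _

lemma valleys_subset_range : valleys s ⊆ range (L + 1) := fun i hi => by
  have := mem_valleys.1 hi
  simp only [mem_range]
  omega

lemma peaks_subset_range : peaks s ⊆ range (L + 1) := fun i hi => by
  have := mem_peaks.1 hi
  simp only [mem_range]
  omega

lemma succ_notMem_valleys {i : ℕ} (hi : i ∈ valleys s) : i + 1 ∉ valleys s := by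
  intro h
  have := mem_valleys.1 hi
  have := mem_valleys.1 h
  grind

lemma succ_notMem_peaks {i : ℕ} (hi : i ∈ peaks s) : i + 1 ∉ peaks s := by
  intro h
  have := mem_peaks.1 hi
  have := mem_peaks.1 h
  grind

end PathHeights

/-! ### Flipping marked turns -/

section Flip

/-- Reverse both steps around every index in `A`: this reflects a valley or a peak of `s` at an
index of `A` into a peak or a valley, as long as no two indices in `A` are adjacent. -/
def flipAt (A : Finset ℕ) {L : ℕ} (s : Fin L → Bool) : Fin L → Bool :=
  fun j => if (j : ℕ) ∈ A ∨ (j : ℕ) + 1 ∈ A then !s j else s j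

variable {L : ℕ} {A : Finset ℕ} {s : Fin L → Bool}

lemma flipAt_flipAt (A : Finset ℕ) (s : Fin L → Bool) : flipAt A (flipAt A s) = s := by
  funext j
  simp only [flipAt]
  split <;> simp

lemma stepVal_flipAt (j : ℕ) :
    stepVal (flipAt A s) j = if j ∈ A ∨ j + 1 ∈ A then -stepVal s j else stepVal s j := by
  by_cases hj : j < L
  · simp only [stepVal, dif_pos hj, flipAt]
    by_cases h : j ∈ A ∨ j + 1 ∈ A <;> by_cases hb : s ⟨j, hj⟩ = true <;> simp [h, hb]
  · simp [stepVal, hj]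

/-- Both kinds of turns at once: `e = 1` for valleys and `e = -1` for peaks. -/
lemma pht_flipAt {e : ℤ} (he : e ≠ 0)
    (hA : ∀ i ∈ A, 1 ≤ i ∧ stepVal s (i - 1) = -e ∧ stepVal s i = e) (i : ℕ) :
    pht (flipAt A s) i = pht s i + if i ∈ A then 2 * e else 0 := by
  induction i with
  | zero =>
    have : 0 ∉ A := fun h => by simpa using (hA 0 h).1
    simp [pht_zero, this]
  | succ i ih =>
    rw [pht_succ, pht_succ, ih, stepVal_flipAt]
    have hi : i ∈ A → stepVal s i = e := fun h => (hA i h).2.2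
    have hi' : i + 1 ∈ A → stepVal s i = -e := fun h => (hA (i + 1) h).2.1
    split_ifs <;> grind

lemma pht_flipAt_of_subset_valleys (hA : A ⊆ valleys s) (i : ℕ) :
    pht (flipAt A s) i = pht s i + if i ∈ A then 2 else 0 :=
  pht_flipAt one_ne_zero (fun i hi => by
    have := hA hi
    simp only [valleys, mem_filter, mem_Icc] at this
    omega) i

lemma pht_flipAt_of_subset_peaks (hA : A ⊆ peaks s) (i : ℕ) :
    pht (flipAt A s) i = pht s i - if i ∈ A then 2 else 0 := by
  rw [pht_flipAt (e := -1) (by norm_num) (fun i hi => by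
    have := hA hi
    simp only [peaks, mem_filter, mem_Icc] at this
    omega) i]
  split_ifs <;> ring

lemma subset_highPeaks_flipAt (hs : IsDyck s) (hA : A ⊆ valleys s) :
    A ⊆ highPeaks (flipAt A s) := by
  intro i hi
  have hnext : i + 1 ∉ A := fun h => succ_notMem_valleys (hA hi) (hA h)
  have hprev : i - 1 ∉ A := fun h => succ_notMem_valleys (hA h) (by grind [mem_valleys])
  have := mem_valleys.1 (hA hi)
  have := hs.pht_nonneg (i := i) (by omega)
  simp only [mem_highPeaks, mem_peaks, pht_flipAt_of_subset_valleys hA, hi, hnext, hprev,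
    if_true, if_false]
  omega

lemma subset_valleys_flipAt (hA : A ⊆ peaks s) : A ⊆ valleys (flipAt A s) := by
  intro i hi
  have hnext : i + 1 ∉ A := fun h => succ_notMem_peaks (hA hi) (hA h)
  have hprev : i - 1 ∉ A := fun h => succ_notMem_peaks (hA h) (by grind [mem_peaks])
  have := mem_peaks.1 (hA hi)
  simp only [mem_valleys, pht_flipAt_of_subset_peaks hA, hi, hnext, hprev, if_true, if_false]
  omega

lemma isDyck_flipAt_of_subset_valleys (hs : IsDyck s) (hA : A ⊆ valleys s) :
    IsDyck (flipAt A s) := by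
  have hlast : L ∉ A := fun h => by simpa using (mem_valleys.1 (hA h)).2.1
  refine ⟨fun i hi => ?_, ?_⟩
  · have := hs.1 i hi
    rw [pht_flipAt_of_subset_valleys hA]
    split <;> omega
  · rw [pht_flipAt_of_subset_valleys hA, hs.2, if_neg hlast, add_zero]

lemma isDyck_flipAt_of_subset_highPeaks (hs : IsDyck s) (hA : A ⊆ highPeaks s) :
    IsDyck (flipAt A s) := by
  have hA' := hA.trans highPeaks_subset_peaks
  have hlast : L ∉ A := fun h => by simpa using (mem_peaks.1 (hA' h)).2.1
  refine ⟨fun i hi => ?_, ?_⟩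
  · rw [pht_flipAt_of_subset_peaks hA']
    split_ifs with h
    · linarith [(mem_highPeaks.1 (hA h)).2]
    · simpa using hs.1 i hi
  · rw [pht_flipAt_of_subset_peaks hA', hs.2, if_neg hlast, sub_zero]

lemma sum_valleys_eq_sum_highPeaks {M : Type*} [AddCommMonoid M]
    {f g : (Fin L → Bool) → Finset ℕ → M}
    (hfg : ∀ s, IsDyck s → ∀ A ⊆ valleys s, f s A = g (flipAt A s) A) :
    ∑ s ∈ dyckPaths L, ∑ A ∈ (valleys s).powerset, f s A =
      ∑ s ∈ dyckPaths L, ∑ A ∈ (highPeaks s).powerset, g s A := by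
  rw [sum_sigma', sum_sigma']
  refine sum_nbij' (fun x => ⟨flipAt x.2 x.1, x.2⟩) (fun x => ⟨flipAt x.2 x.1, x.2⟩) ?_ ?_
    (fun x _ => by simp only [flipAt_flipAt]) (fun x _ => by simp only [flipAt_flipAt]) ?_ <;>
    rintro ⟨s, A⟩ h <;> simp only [mem_sigma, mem_dyckPaths, mem_powerset] at h ⊢
  · exact ⟨isDyck_flipAt_of_subset_valleys h.1 h.2, subset_highPeaks_flipAt h.1 h.2⟩
  · exact ⟨isDyck_flipAt_of_subset_highPeaks h.1 h.2,
      subset_valleys_flipAt (h.2.trans highPeaks_subset_peaks)⟩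
  · exact hfg s h.1 A h.2

end Flip

/-! ### Marked weights -/

section MarkedWeights

lemma prod_mul_prod_one_sub_inv {ι F : Type*} [DecidableEq ι] [Field F] {T V : Finset ι}
    (hTV : T ⊆ V) {g : ι → F} (hg : ∀ i ∈ T, g i ≠ 0) :
    (∏ i ∈ T, (1 - (g i)⁻¹)) * ∏ i ∈ V, g i = ∑ A ∈ Icc T V, ∏ i ∈ A, (g i - 1) := by
  have hT : (∏ i ∈ T, (1 - (g i)⁻¹)) * ∏ i ∈ T, g i = ∏ i ∈ T, (g i - 1) := by
    rw [← prod_mul_distrib]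
    exact prod_congr rfl fun i hi => by rw [sub_mul, one_mul, inv_mul_cancel₀ (hg i hi)]
  have hdisj {B : Finset ι} (hB : B ∈ (V \ T).powerset) : Disjoint T B :=
    disjoint_of_subset_right (mem_powerset.1 hB) disjoint_sdiff
  calc (∏ i ∈ T, (1 - (g i)⁻¹)) * ∏ i ∈ V, g i
      = (∏ i ∈ T, (g i - 1)) * ∏ i ∈ V \ T, (g i - 1 + 1) := by
        simp only [sub_add_cancel]
        rw [← prod_sdiff hTV, mul_comm (∏ i ∈ V \ T, g i), ← mul_assoc, hT]
    _ = ∑ B ∈ (V \ T).powerset, ∏ i ∈ T ∪ B, (g i - 1) := by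
        rw [prod_add_one, mul_sum]
        exact sum_congr rfl fun B hB => (prod_union (hdisj hB)).symm
    _ = ∑ A ∈ Icc T V, ∏ i ∈ A, (g i - 1) := by
        rw [Icc_eq_image_powerset hTV, sum_image]
        intro B hB C hC h
        rw [← union_sdiff_cancel_left (hdisj hB), ← union_sdiff_cancel_left (hdisj hC)]
        exact congrArg (· \ T) h

/-- The weight of the path `s` from `(a, 0)` with a set `A` of marked points: each marked point
counts `c`, every other point `p` counts `wt p`. This is the weight of the Schröder path obtained
by flattening the marked turns of `s`. -/
def markedWt {M : Type*} [CommMonoid M] (wt : ℤ × ℕ → M) (c : M) (a : ℤ) {L : ℕ}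
    (s : Fin L → Bool) (A : Finset ℕ) : M :=
  c ^ #A * ∏ i ∈ range (L + 1) \ A, wt (ptOf a s i)

variable {L : ℕ} {s : Fin L → Bool}

lemma markedWt_flipAt {M : Type*} [CommMonoid M] (wt : ℤ × ℕ → M) (c : M) (a : ℤ)
    {A : Finset ℕ} (hA : A ⊆ valleys s) :
    markedWt wt c a (flipAt A s) A = markedWt wt c a s A := by
  refine congrArg (c ^ #A * ·) (prod_congr rfl fun i hi => ?_)
  rw [ptOf, ptOf, pht_flipAt_of_subset_valleys hA, if_neg (mem_sdiff.1 hi).2, add_zero]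

variable {F : Type*} [Field F] {wt wte : ℤ × ℕ → F} {c : F}

lemma prod_mul_prod_sub_one_eq_markedWt (h1 : ∀ p, wt p * (wte p - 1) = c) (a : ℤ)
    {A : Finset ℕ} (hA : A ⊆ range (L + 1)) :
    (∏ i ∈ range (L + 1), wt (ptOf a s i)) * ∏ i ∈ A, (wte (ptOf a s i) - 1) =
      markedWt wt c a s A := by
  rw [← prod_sdiff hA, mul_assoc, ← prod_mul_distrib, prod_congr rfl fun i _ => h1 (ptOf a s i),
    prod_const, mul_comm, markedWt]

lemma prod_one_sub_inv_mul_eq_sum_markedWt (h1 : ∀ p, wt p * (wte p - 1) = c)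
    (h2 : ∀ p, wte p ≠ 0) (a : ℤ) {T V : Finset ℕ} (hTV : T ⊆ V) (hV : V ⊆ range (L + 1)) :
    (∏ i ∈ T, (1 - (wte (ptOf a s i))⁻¹)) *
        ((∏ i ∈ range (L + 1), wt (ptOf a s i)) * ∏ i ∈ V, wte (ptOf a s i)) =
      ∑ A ∈ Icc T V, markedWt wt c a s A := by
  rw [mul_left_comm, prod_mul_prod_one_sub_inv hTV fun i _ => h2 _, mul_sum]
  exact sum_congr rfl fun A hA =>
    prod_mul_prod_sub_one_eq_markedWt h1 a ((mem_Icc.1 hA).2.trans hV)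

lemma wtHigh_eq_sum_markedWt (h1 : ∀ p, wt p * (wte p - 1) = c) (h2 : ∀ p, wte p ≠ 0) (a : ℤ)
    (s : Fin L → Bool) :
    wtHigh wt wte a s = ∑ A ∈ (highPeaks s).powerset, markedWt wt c a s A := by
  have h := prod_one_sub_inv_mul_eq_sum_markedWt (s := s) h1 h2 a (empty_subset (highPeaks s))
    (highPeaks_subset_peaks.trans peaks_subset_range)
  rwa [prod_empty, one_mul, Icc_eq_filter_powerset, filter_true_of_mem fun _ _ => empty_subset _]
    at h

end MarkedWeights

/-! ### Consecutive paths -/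

section Comparison

lemma forall_mem_Icc_iff_forall_nat (m : ℕ) (b : ℤ) (P : ℤ → Prop) :
    (∀ x ∈ Icc (-(m : ℤ)) b, P x) ↔ ∀ i : ℕ, (i : ℤ) ≤ b + m → P (-m + i) := by
  constructor
  · intro h i hi
    exact h _ (mem_Icc.2 ⟨by omega, by omega⟩)
  · intro h x hx
    rw [mem_Icc] at hx
    have := h (x + m).toNat (by omega)
    rwa [Int.toNat_of_nonneg (by omega), neg_add_cancel_comm_assoc] at this

lemma aht_neg_add (m i : ℕ) {L : ℕ} (s : Fin L → Bool) : aht m s (-m + i) = pht s i :=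
  congrArg (pht s) (by omega)

lemma aht_add_two_neg_add (m i : ℕ) {L : ℕ} (s : Fin L → Bool) :
    aht (m + 2) s (-m + i) = pht s (i + 2) :=
  congrArg (pht s) (by omega)

variable {m L₁ L₂ : ℕ}

lemma pathLT_iff {s₁ : Fin L₁ → Bool} {s₂ : Fin L₂ → Bool} :
    PathLT m (m + 2) s₁ s₂ ↔ ∀ i ≤ 2 * m, pht s₁ i < pht s₂ (i + 2) := by
  rw [PathLT, forall_mem_Icc_iff_forall_nat]
  simp only [aht_neg_add, aht_add_two_neg_add]
  exact forall_congr' fun i => imp_congr_left (by omega)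

lemma pathLE_iff {s₁ : Fin L₁ → Bool} {s₂ : Fin L₂ → Bool} :
    PathLE m (m + 2) s₁ s₂ ↔ (∀ i ≤ 2 * m, pht s₁ i ≤ pht s₂ (i + 2)) ∧
      ∀ i < 2 * m, ¬(pht s₁ i = pht s₂ (i + 2) ∧ pht s₁ (i + 1) = pht s₂ (i + 1 + 2)) := by
  rw [PathLE, forall_mem_Icc_iff_forall_nat, forall_mem_Icc_iff_forall_nat]
  simp only [add_assoc (-(m : ℤ)), ← Nat.cast_add_one, aht_neg_add, aht_add_two_neg_add]
  exact and_congr (forall_congr' fun i => imp_congr_left (by omega))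
    (forall_congr' fun i => imp_congr_left (by omega))

/-- The common points of a path from `(-m, 0)` to `(m, 0)` and a path from `(-m - 2, 0)` above
it, as indices along the lower path; along the upper path the indices are larger by `2`. -/
def contacts (m : ℕ) {L₁ L₂ : ℕ} (s₁ : Fin L₁ → Bool) (s₂ : Fin L₂ → Bool) : Finset ℕ :=
  {i ∈ range (2 * m + 1) | pht s₁ i = pht s₂ (i + 2)}

lemma mem_contacts {s₁ : Fin L₁ → Bool} {s₂ : Fin L₂ → Bool} {i : ℕ} :
    i ∈ contacts m s₁ s₂ ↔ i ≤ 2 * m ∧ pht s₁ i = pht s₂ (i + 2) := by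
  simp [contacts]

section InterProd

variable {F : Type*} [Field F] (f : ℤ × ℕ → F) (s₁ : Fin L₁ → Bool) (s₂ : Fin L₂ → Bool)

lemma interProd_eq_prod_contacts :
    interProd f m (m + 2) s₁ s₂ = ∏ i ∈ contacts m s₁ s₂, f (ptOf (-(m : ℤ)) s₁ i) := by
  refine (prod_nbij' (fun i : ℕ => -(m : ℤ) + i) (fun x => (x + m).toNat) ?_ ?_ ?_ ?_ ?_).symm
  · intro i hi
    rw [mem_contacts] at hi
    simp only [interPts, mem_filter, mem_Icc, aht_neg_add, aht_add_two_neg_add]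
    exact ⟨by omega, hi.2⟩
  · intro x hx
    obtain ⟨hxm, hx⟩ := mem_filter.1 hx
    rw [mem_Icc] at hxm
    refine mem_contacts.2 ⟨by omega, hx.trans (congrArg (pht s₂) ?_)⟩
    omega
  · intro i _
    omega
  · intro x hx
    have := mem_Icc.1 (mem_filter.1 hx).1
    omega
  · intro i _
    rw [aht_neg_add, ptOf]

lemma interProd_eq_prod_map_contacts :
    interProd f m (m + 2) s₁ s₂ =
      ∏ i ∈ (contacts m s₁ s₂).map (addRightEmbedding 2),
        f (ptOf (-((m + 2 : ℕ) : ℤ)) s₂ i) := by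
  rw [interProd_eq_prod_contacts, prod_map]
  refine prod_congr rfl fun i hi => congrArg f ?_
  rw [addRightEmbedding_apply, ptOf, ptOf, (mem_contacts.1 hi).2]
  exact congrArg (·, _) (by omega)

end InterProd

lemma forall_lt_add_ite_iff {f g : ℕ → ℤ} {N : ℕ} {p : ℕ → Prop} [DecidablePred p]
    (hpar : ∀ i ≤ N, f i % 2 = g i % 2) (hp : ∀ i, p i → ¬p (i + 1)) :
    (∀ i ≤ N, f i < g i + if p i then 2 else 0) ↔
      ((∀ i ≤ N, f i ≤ g i) ∧ ∀ i < N, ¬(f i = g i ∧ f (i + 1) = g (i + 1))) ∧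
        ∀ i ≤ N, f i = g i → p i := by
  constructor
  · intro h
    have heq_imp (i : ℕ) (hi : i ≤ N) (heq : f i = g i) : p i := by
      by_contra hpi
      simpa [hpi, heq] using h i hi
    refine ⟨⟨fun i hi => ?_, fun i hi ⟨heq, heq'⟩ => ?_⟩, heq_imp⟩
    · have := h i hi
      have := hpar i hi
      split_ifs at * <;> omega
    · exact hp i (heq_imp i hi.le heq) (heq_imp (i + 1) hi heq')
  · rintro ⟨⟨hle, -⟩, heq_imp⟩ i hi
    split_ifs with hpi
    · linarith [hle i hi]
    · rw [add_zero]
      exact (hle i hi).lt_of_ne (mt (heq_imp i hi) hpi)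

lemma pht_emod_two_eq (s₁ : Fin (2 * m) → Bool) (s₂ : Fin (2 * (m + 2)) → Bool) {i : ℕ}
    (hi : i ≤ 2 * m) : pht s₁ i % 2 = pht s₂ (i + 2) % 2 := by
  rw [pht_emod_two s₁ hi, pht_emod_two s₂ (by omega)]
  omega

variable {s₁ : Fin (2 * m) → Bool} {s₂ : Fin (2 * (m + 2)) → Bool} {A : Finset ℕ}

lemma pathLT_flipAt_left_iff (hA : A ⊆ peaks s₁) :
    PathLT m (m + 2) (flipAt A s₁) s₂ ↔ PathLE m (m + 2) s₁ s₂ ∧ contacts m s₁ s₂ ⊆ A := by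
  have hcontacts : contacts m s₁ s₂ ⊆ A ↔ ∀ i ≤ 2 * m, pht s₁ i = pht s₂ (i + 2) → i ∈ A := by
    simp only [subset_iff, mem_contacts, and_imp]
  rw [pathLE_iff, hcontacts, pathLT_iff, ← forall_lt_add_ite_iff (p := (· ∈ A))
    (fun _ => pht_emod_two_eq s₁ s₂) fun i hi h => succ_notMem_peaks (hA hi) (hA h)]
  simp only [pht_flipAt_of_subset_peaks hA, sub_lt_iff_lt_add]

lemma pathLT_flipAt_right_iff (hA : A ⊆ valleys s₂) :
    PathLT m (m + 2) s₁ (flipAt A s₂) ↔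
      PathLE m (m + 2) s₁ s₂ ∧ (contacts m s₁ s₂).map (addRightEmbedding 2) ⊆ A := by
  have hcontacts : (contacts m s₁ s₂).map (addRightEmbedding 2) ⊆ A ↔
      ∀ i ≤ 2 * m, pht s₁ i = pht s₂ (i + 2) → i + 2 ∈ A := by
    simp only [subset_iff, mem_map, mem_contacts, forall_exists_index, and_imp,
      addRightEmbedding_apply]
    exact ⟨fun h i hi heq => h i hi heq rfl, fun h _ i hi heq hj => hj ▸ h i hi heq⟩
  rw [pathLE_iff, hcontacts, pathLT_iff, ← forall_lt_add_ite_iff (p := (· + 2 ∈ A))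
    (fun _ => pht_emod_two_eq s₁ s₂) fun i hi h => succ_notMem_valleys (hA hi) (hA h)]
  simp only [pht_flipAt_of_subset_valleys hA]

lemma PathLE.pht_succ_of_contact (hle : PathLE m (m + 2) s₁ s₂) {i : ℕ} (hi : i < 2 * m)
    (heq : pht s₁ i = pht s₂ (i + 2)) :
    pht s₁ (i + 1) = pht s₁ i - 1 ∧ pht s₂ (i + 2 + 1) = pht s₂ (i + 2) + 1 := by
  rw [pathLE_iff] at hle
  have := hle.1 (i + 1) hi
  have := hle.2 i hi
  have := pht_succ_eq_or s₁ hi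
  have := pht_succ_eq_or s₂ (i := i + 2) (by omega)
  grind

lemma PathLE.pht_of_contact_succ (hle : PathLE m (m + 2) s₁ s₂) {i : ℕ} (hi : i < 2 * m)
    (heq : pht s₁ (i + 1) = pht s₂ (i + 1 + 2)) :
    pht s₁ i = pht s₁ (i + 1) - 1 ∧ pht s₂ (i + 2) = pht s₂ (i + 1 + 2) + 1 := by
  rw [pathLE_iff] at hle
  have := hle.1 i hi.le
  have := hle.2 i hi
  have := pht_succ_eq_or s₁ hi
  have := pht_succ_eq_or s₂ (i := i + 2) (by omega)
  grind

lemma contacts_subset_peaks (hm : 0 < m) (hs₁ : IsDyck s₁) (hle : PathLE m (m + 2) s₁ s₂) :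
    contacts m s₁ s₂ ⊆ peaks s₁ := by
  intro i hi
  obtain ⟨him, heq⟩ := mem_contacts.1 hi
  have hright (h : i < 2 * m) := hle.pht_succ_of_contact h heq
  rcases i with _ | i
  · have := hs₁.pht_nonneg (i := 1) (by omega)
    have := pht_zero s₁
    have := hright (by omega)
    grind
  · have hleft := hle.pht_of_contact_succ him heq
    have := hs₁.pht_nonneg (i := i) (by omega)
    have hlt : i + 1 < 2 * m := him.lt_of_ne fun h => by
      have := hs₁.2
      grind
    exact mem_peaks.2 ⟨by omega, hlt, hleft.1, (hright hlt).1⟩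

lemma map_contacts_subset_valleys (hs₁ : IsDyck s₁) (hs₂ : IsDyck s₂)
    (hle : PathLE m (m + 2) s₁ s₂) :
    (contacts m s₁ s₂).map (addRightEmbedding 2) ⊆ valleys s₂ := by
  intro j hj
  obtain ⟨i, hi, rfl⟩ := mem_map.1 hj
  obtain ⟨him, heq⟩ := mem_contacts.1 hi
  have hleft : pht s₂ (i + 1) = pht s₂ (i + 2) + 1 := by
    rcases i with _ | i
    · have := hs₂.pht_nonneg (i := 1) (by omega)
      have := pht_succ_eq_or s₂ (i := 1) (by omega)
      have := pht_zero s₁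
      grind
    · exact (hle.pht_of_contact_succ him heq).2
  have hright : pht s₂ (i + 2 + 1) = pht s₂ (i + 2) + 1 := by
    rcases him.lt_or_eq with h | rfl
    · exact (hle.pht_succ_of_contact h heq).2
    · have := hs₂.pht_nonneg (i := 2 * m + 2 + 1) (by omega)
      have := pht_succ_eq_or s₂ (i := 2 * m + 2) (by omega)
      have := hs₁.2
      grind
  exact mem_valleys.2 ⟨by simp, by simp; omega, hleft, hright⟩

lemma peaks_subset_highPeaks_of_pathLT (hs₁ : IsDyck s₁) (hlt : PathLT m (m + 2) s₁ s₂) :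
    peaks s₂ ⊆ highPeaks s₂ := by
  have htwo (i : ℕ) (hi : i ≤ 2 * m) : 2 ≤ pht s₂ (i + 2) := by
    have := pathLT_iff.1 hlt i hi
    have := pht_emod_two_eq s₁ s₂ hi
    have := hs₁.pht_nonneg hi
    omega
  intro i hi
  obtain ⟨h1, h2, hprev, hnext⟩ := mem_peaks.1 hi
  refine mem_highPeaks.2 ⟨hi, ?_⟩
  rcases (by omega : i = 1 ∨ 2 ≤ i ∧ i ≤ 2 * m + 2 ∨ i = 2 * m + 3) with rfl | hmid | rfl
  · linarith [htwo 0 (by omega)]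
  · simpa [Nat.sub_add_cancel hmid.1] using htwo (i - 2) (by omega)
  · have : pht s₂ (2 * m + 2) = pht s₂ (2 * m + 3) - 1 := hprev
    linarith [htwo (2 * m) le_rfl]

end Comparison

/-! ### Exchanging weak and strict steps -/

section Exchange

variable {F : Type*} [Field F]

/-- The factor in the weak sum of two consecutive paths `s₁ ≤ s₂`, and `0` unless `s₁ ≤ s₂`. -/
def weakKernel (wte : ℤ × ℕ → F) (m : ℕ) {L₁ L₂ : ℕ} (s₁ : Fin L₁ → Bool)
    (s₂ : Fin L₂ → Bool) : F :=
  if PathLE m (m + 2) s₁ s₂ then interProd (fun p => 1 - (wte p)⁻¹) m (m + 2) s₁ s₂ else 0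

variable (F) in
/-- The indicator, with values in `F`, of `s₁ < s₂` for two consecutive paths. -/
def strictKernel (m : ℕ) {L₁ L₂ : ℕ} (s₁ : Fin L₁ → Bool) (s₂ : Fin L₂ → Bool) : F :=
  if PathLT m (m + 2) s₁ s₂ then 1 else 0

variable {wt wte : ℤ × ℕ → F} {c : F}

lemma ite_mul_eq_sum_ite_mul_markedWt (h1 : ∀ p, wt p * (wte p - 1) = c)
    (h2 : ∀ p, wte p ≠ 0) (a : ℤ) {L : ℕ} {s : Fin L → Bool} {T V : Finset ℕ}
    (hV : V ⊆ range (L + 1)) {P : Prop} (hTV : P → T ⊆ V) {Q : Finset ℕ → Prop}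
    (hQ : ∀ A ⊆ V, Q A ↔ P ∧ T ⊆ A) :
    (if P then ∏ i ∈ T, (1 - (wte (ptOf a s i))⁻¹) else 0) *
        ((∏ i ∈ range (L + 1), wt (ptOf a s i)) * ∏ i ∈ V, wte (ptOf a s i)) =
      ∑ A ∈ V.powerset, (if Q A then 1 else 0) * markedWt wt c a s A := by
  rw [ite_mul, zero_mul, sum_congr rfl fun A hA => by rw [hQ A (mem_powerset.1 hA)]]
  split_ifs with hP
  · rw [prod_one_sub_inv_mul_eq_sum_markedWt h1 h2 a (hTV hP) hV, Icc_eq_filter_powerset,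
      sum_filter]
    simp only [hP, true_and, ite_mul, one_mul, zero_mul]
  · simp only [hP, false_and, if_false, zero_mul, sum_const_zero]

variable {m : ℕ} {s₁ : Fin (2 * m) → Bool} {s₂ : Fin (2 * (m + 2)) → Bool}

lemma weakKernel_mul_wtVal (h1 : ∀ p, wt p * (wte p - 1) = c) (h2 : ∀ p, wte p ≠ 0)
    (hs₁ : IsDyck s₁) (hs₂ : IsDyck s₂) :
    weakKernel wte m s₁ s₂ * wtVal wt wte (-((m + 2 : ℕ) : ℤ)) s₂ =
      ∑ A ∈ (valleys s₂).powerset, strictKernel F m s₁ (flipAt A s₂) *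
        markedWt wt c (-((m + 2 : ℕ) : ℤ)) s₂ A := by
  rw [weakKernel, interProd_eq_prod_map_contacts]
  exact ite_mul_eq_sum_ite_mul_markedWt h1 h2 _ valleys_subset_range
    (map_contacts_subset_valleys hs₁ hs₂) fun A => pathLT_flipAt_right_iff

lemma weakKernel_mul_wtHigh (h1 : ∀ p, wt p * (wte p - 1) = c) (h2 : ∀ p, wte p ≠ 0)
    (hm : 0 < m) (hs₁ : IsDyck s₁) (hpeaks : peaks s₁ ⊆ highPeaks s₁) :
    weakKernel wte m s₁ s₂ * wtHigh wt wte (-(m : ℤ)) s₁ =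
      ∑ A ∈ (highPeaks s₁).powerset, strictKernel F m (flipAt A s₁) s₂ *
        markedWt wt c (-(m : ℤ)) s₁ A := by
  rw [weakKernel, interProd_eq_prod_contacts]
  exact ite_mul_eq_sum_ite_mul_markedWt h1 h2 _ (highPeaks_subset_peaks.trans peaks_subset_range)
    (fun hle => (contacts_subset_peaks hm hs₁ hle).trans hpeaks)
    fun A hA => pathLT_flipAt_left_iff (hA.trans highPeaks_subset_peaks)

lemma sum_weakKernel_mul_eq (h1 : ∀ p, wt p * (wte p - 1) = c) (h2 : ∀ p, wte p ≠ 0) {t : F}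
    (h3 : ∀ s : Fin (2 * (m + 2)) → Bool, IsDyck s → peaks s ⊆ highPeaks s →
      wtHigh wt wte (-((m + 2 : ℕ) : ℤ)) s = t * wtVal wt wte (-((m + 2 : ℕ) : ℤ)) s)
    (hs₁ : IsDyck s₁) {g h : (Fin (2 * (m + 2)) → Bool) → F}
    (hgh : ∀ s, IsDyck s → peaks s ⊆ highPeaks s →
      h s * wtHigh wt wte (-((m + 2 : ℕ) : ℤ)) s =
        ∑ A ∈ (highPeaks s).powerset, g (flipAt A s) *
          markedWt wt c (-((m + 2 : ℕ) : ℤ)) s A) :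
    ∑ s ∈ dyckPaths (2 * (m + 2)),
        weakKernel wte m s₁ s * wtVal wt wte (-((m + 2 : ℕ) : ℤ)) s * g s =
      t * ∑ s ∈ dyckPaths (2 * (m + 2)),
        strictKernel F m s₁ s * wtVal wt wte (-((m + 2 : ℕ) : ℤ)) s * h s := by
  calc _ = ∑ s ∈ dyckPaths (2 * (m + 2)), ∑ A ∈ (valleys s).powerset,
        strictKernel F m s₁ (flipAt A s) * markedWt wt c (-((m + 2 : ℕ) : ℤ)) s A * g s :=
      sum_congr rfl fun s hs => by
        rw [weakKernel_mul_wtVal h1 h2 hs₁ (mem_dyckPaths.1 hs), sum_mul]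
    _ = ∑ s ∈ dyckPaths (2 * (m + 2)), ∑ A ∈ (highPeaks s).powerset,
        strictKernel F m s₁ s * markedWt wt c (-((m + 2 : ℕ) : ℤ)) s A * g (flipAt A s) :=
      sum_valleys_eq_sum_highPeaks fun s _ A hA => by
        rw [markedWt_flipAt wt c _ hA, flipAt_flipAt]
    _ = ∑ s ∈ dyckPaths (2 * (m + 2)),
        t * (strictKernel F m s₁ s * wtVal wt wte (-((m + 2 : ℕ) : ℤ)) s * h s) :=
      sum_congr rfl fun s hs => ?_
    _ = _ := (mul_sum _ _ _).symm
  by_cases hlt : PathLT m (m + 2) s₁ s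
  · have hpeaks := peaks_subset_highPeaks_of_pathLT hs₁ hlt
    rw [mem_dyckPaths] at hs
    calc _ = strictKernel F m s₁ s * (h s * wtHigh wt wte (-((m + 2 : ℕ) : ℤ)) s) := by
          rw [hgh s hs hpeaks, mul_sum]
          exact sum_congr rfl fun A _ => by ring
      _ = _ := by
          rw [h3 s hs hpeaks]
          ring
  · simp only [strictKernel, if_neg hlt, zero_mul, sum_const_zero, mul_zero]

/-- The Dyck paths from `(-m, 0)` to `(m, 0)`. -/
abbrev DyckPath (m : ℕ) : Type := dyckPaths (2 * m)

variable (wt wte) in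
/-- The transfer matrix of the weak sum, weighted by the upper path. -/
def weakStep (m : ℕ) : Matrix (DyckPath m) (DyckPath (m + 2)) F :=
  .of fun s₁ s₂ => weakKernel wte m s₁.1 s₂.1 * wtVal wt wte (-((m + 2 : ℕ) : ℤ)) s₂.1

variable (wt wte) in
/-- The transfer matrix of the strict sum, weighted by the upper path. -/
def strictStep (m : ℕ) : Matrix (DyckPath m) (DyckPath (m + 2)) F :=
  .of fun s₁ s₂ => strictKernel F m s₁.1 s₂.1 * wtVal wt wte (-((m + 2 : ℕ) : ℤ)) s₂.1

variable {t : ℕ → F}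

lemma weakStep_mul_strictStep (h1 : ∀ p, wt p * (wte p - 1) = c) (h2 : ∀ p, wte p ≠ 0)
    (h3 : ∀ (j : ℕ) (s : Fin (2 * j) → Bool), IsDyck s → peaks s ⊆ highPeaks s →
      wtHigh wt wte (-(j : ℤ)) s = t j * wtVal wt wte (-(j : ℤ)) s) (m : ℕ) :
    weakStep wt wte m * strictStep wt wte (m + 2) =
      t (m + 2) • (strictStep wt wte m * weakStep wt wte (m + 2)) := by
  ext ⟨s₁, hs₁⟩ ⟨s₃, -⟩
  simp only [Matrix.smul_apply, Matrix.mul_apply, weakStep, strictStep, Matrix.of_apply,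
    smul_eq_mul]
  refine (sum_coe_sort _ _).trans <| (sum_weakKernel_mul_eq h1 h2 (h3 _) (mem_dyckPaths.1 hs₁)
    (g := fun s => strictKernel F (m + 2) s s₃ * wtVal wt wte (-((m + 2 + 2 : ℕ) : ℤ)) s₃)
    (h := fun s => weakKernel wte (m + 2) s s₃ * wtVal wt wte (-((m + 2 + 2 : ℕ) : ℤ)) s₃)
    fun s hs hpeaks => ?_).trans <| congrArg _ (sum_coe_sort _ _).symm
  rw [mul_right_comm, weakKernel_mul_wtHigh h1 h2 (by omega) hs hpeaks, sum_mul]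
  exact sum_congr rfl fun A _ => mul_right_comm _ _ _

lemma weakStep_mulVec_one (h1 : ∀ p, wt p * (wte p - 1) = c) (h2 : ∀ p, wte p ≠ 0)
    (h3 : ∀ (j : ℕ) (s : Fin (2 * j) → Bool), IsDyck s → peaks s ⊆ highPeaks s →
      wtHigh wt wte (-(j : ℤ)) s = t j * wtVal wt wte (-(j : ℤ)) s) (m : ℕ) :
    (weakStep wt wte m).mulVec 1 = t (m + 2) • (strictStep wt wte m).mulVec 1 := by
  ext ⟨s₁, hs₁⟩
  refine (sum_coe_sort _ _).trans <| (sum_weakKernel_mul_eq h1 h2 (h3 _) (mem_dyckPaths.1 hs₁)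
    (g := 1) (h := 1) fun s _ _ => ?_).trans <| congrArg _ (sum_coe_sort _ _).symm
  simp only [Pi.one_apply, one_mul, wtHigh_eq_sum_markedWt h1 h2]

end Exchange

/-! ### Tuples of paths -/

section Tuples

lemma sum_piFinset_eq_sum_subtype {ι : Type*} [Fintype ι] [DecidableEq ι] {β : ι → Type*}
    {M : Type*} [AddCommMonoid M] (S : ∀ i, Finset (β i)) (f : (∀ i, β i) → M) :
    ∑ D ∈ Fintype.piFinset S, f D = ∑ D : ∀ i, S i, f fun i => D i := by
  refine sum_bij' (fun D hD i => ⟨D i, Fintype.mem_piFinset.1 hD i⟩) (fun D _ i => D i)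
    ?_ ?_ ?_ ?_ ?_ <;> simp

variable {F : Type*} [Field F] (wt wte : ℤ × ℕ → F)

lemma sum_tuples_eq_dotProduct_walkVec (n k : ℕ)
    (P : ∀ i : ℕ, (Fin (2 * (n + 2 * i)) → Bool) → (Fin (2 * (n + 2 * (i + 1))) → Bool) → Prop)
    (u : ∀ i : ℕ, (Fin (2 * (n + 2 * i)) → Bool) → (Fin (2 * (n + 2 * (i + 1))) → Bool) → F) :
    ∑ D : DyckTuple n (k + 1) with (∀ i, IsDyck (D i)) ∧
        ∀ j : Fin k, P j (D j.castSucc) (D j.succ),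
      (∏ i : Fin (k + 1), wtVal wt wte (-((n + 2 * (i : ℕ) : ℕ) : ℤ)) (D i)) *
        ∏ j : Fin k, u j (D j.castSucc) (D j.succ) =
    (fun s : DyckPath n => wtVal wt wte (-(n : ℤ)) s.1) ⬝ᵥ
      walkVec k (α := fun i => DyckPath (n + 2 * i)) fun i => .of fun s₁ s₂ =>
        (if P i s₁.1 s₂.1 then u i s₁.1 s₂.1 else 0) *
          wtVal wt wte (-((n + 2 * (i + 1) : ℕ) : ℤ)) s₂.1 := by
  have hfilter : ({D | (∀ i, IsDyck (D i)) ∧ ∀ j : Fin k, P j (D j.castSucc) (D j.succ)} :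
        Finset (DyckTuple n (k + 1))) =
      {D ∈ Fintype.piFinset fun i : Fin (k + 1) => dyckPaths (2 * (n + 2 * (i : ℕ))) |
        ∀ j : Fin k, P j (D j.castSucc) (D j.succ)} := by
    ext D
    simp only [mem_filter, mem_univ, true_and, Fintype.mem_piFinset, mem_dyckPaths]
  rw [hfilter, sum_filter, sum_piFinset_eq_sum_subtype]
  refine Eq.trans (sum_congr rfl fun D _ => ?_)
    (sum_walks_eq_dotProduct_walkVec k (α := fun i => DyckPath (n + 2 * i)) _ _)
  simp only [Matrix.of_apply, prod_mul_distrib, prod_ite_zero, mem_univ, true_imp_iff]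
  rw [Fin.prod_univ_succ, ite_mul, zero_mul, mul_ite, mul_zero]
  exact ite_congr rfl (fun _ => (mul_assoc _ _ _).trans (congrArg _ (mul_comm _ _))) fun _ => rfl

lemma neg_sub_two_mul_eq_neg_cast (n i : ℕ) : -(n : ℤ) - 2 * i = -((n + 2 * i : ℕ) : ℤ) := by
  push_cast
  ring

lemma weakSum_succ (n k : ℕ) : weakSum wt wte n (k + 1) =
    (fun s : DyckPath n => wtVal wt wte (-(n : ℤ)) s.1) ⬝ᵥ
      walkVec k (α := fun i => DyckPath (n + 2 * i)) fun i => weakStep wt wte (n + 2 * i) := by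
  refine Eq.trans ?_ (sum_tuples_eq_dotProduct_walkVec wt wte n k
    (fun i => PathLE (n + 2 * i) (n + 2 * (i + 1)))
    fun i => interProd (fun p => 1 - (wte p)⁻¹) (n + 2 * i) (n + 2 * (i + 1)))
  simp only [weakSum, weakTuples, neg_sub_two_mul_eq_neg_cast]
  refine sum_congr (filter_congr fun D _ => and_congr_right' ?_) fun D _ => rfl
  exact ⟨fun h j => h j (by omega), fun h i hi => h ⟨i, by omega⟩⟩

lemma strictSum_succ (n k : ℕ) : strictSum wt wte n (k + 1) =
    (fun s : DyckPath n => wtVal wt wte (-(n : ℤ)) s.1) ⬝ᵥ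
      walkVec k (α := fun i => DyckPath (n + 2 * i)) fun i => strictStep wt wte (n + 2 * i) := by
  refine Eq.trans ?_ (sum_tuples_eq_dotProduct_walkVec wt wte n k
    (fun i => PathLT (n + 2 * i) (n + 2 * (i + 1))) fun _ _ _ => 1)
  simp only [strictSum, strictTuples, neg_sub_two_mul_eq_neg_cast, prod_const_one, mul_one]
  refine sum_congr (filter_congr fun D _ => and_congr_right' ?_) fun D _ => rfl
  exact ⟨fun h j => h j (by omega), fun h i hi => h ⟨i, by omega⟩⟩

end Tuples

theorem statement_13 {F : Type*} [Field F] (wt wte : ℤ × ℕ → F) (c : F)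
    (h1 : ∀ p, wt p * (wte p - 1) = c) (h2 : ∀ p, wte p ≠ 0)
    (t : ℕ → F)
    (h3 : ∀ (j : ℕ) (s : Fin (2 * j) → Bool), IsDyck s → peaks s ⊆ highPeaks s →
      wtHigh wt wte (-(j : ℤ)) s = t j * wtVal wt wte (-(j : ℤ)) s)
    (n k : ℕ) (hn : 0 < n) (hk : 0 < k) :
    weakSum wt wte n k =
      (∏ i ∈ Finset.Icc 1 (k - 1), t (n + 2 * i) ^ i) * strictSum wt wte n k := by
  obtain ⟨k, rfl⟩ := Nat.exists_eq_add_one.2 hk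
  have hwalk := walkVec_eq_prod_pow_smul (α := fun i => DyckPath (n + 2 * i))
    (t := fun i => t (n + 2 * (i + 1)))
    (fun i => weakStep_mul_strictStep h1 h2 h3 (n + 2 * i))
    (fun i => weakStep_mulVec_one h1 h2 h3 (n + 2 * i)) k
  have hprod : ∏ i ∈ range k, t (n + 2 * (i + 1)) ^ (i + 1) =
      ∏ i ∈ Icc 1 k, t (n + 2 * i) ^ i := by
    rw [range_eq_Ico, prod_Ico_add' (fun i => t (n + 2 * i) ^ i), zero_add,
      Ico_add_one_right_eq_Icc]
  rw [weakSum_succ, strictSum_succ, hwalk, dotProduct_smul, hprod, smul_eq_mul,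
    Nat.add_sub_cancel]

end Paper
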